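/- arXiv:2103.08899 — 7 statements merged into one kernel-verified Lean document; each statement's English description precedes it below -/
import Mathlib

section
/- Let F : ℝ → ℝ be continuous on [0,1], strictly concave on [0,1], with F(0) = F(1) = 0, let ρ* ∈ (0,1) be its unique maximizer on [0,1] and σ := F(ρ*) > 0. Fix C with 0 < C < σ, let ρ_-(C) ∈ (0, ρ*) and ρ_+(C) ∈ (ρ*, 1) be the unique solutions of F(ρ) = C below and above ρ*. Let ρ : [0, ∞) → ℝ be differentiable with ρ′(y) = (1 − ρ(y))(F(ρ(y)) − C)/C for all y ≥ 0 and ρ(0) ∈ (ρ_-(C), 1). Then ρ(y) ∈ (ρ_-(C), 1) for all y ≥ 0 and ρ(y) → ρ_+(C) as y → ∞. -/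
open Filter

/-!
Write the equation as `ρ' = g(ρ)` with `g(x) = (1 - x)(F(x) - C)/C`. Strict concavity gives `F > C`
on `(ρm, ρp)` and `F < C` on `(ρp, 1)`, so `g > 0` on the first interval and `g < 0` on the second.
No uniqueness theory is needed (`F` need not be Lipschitz at `1`): a level `a` with `g(a) > 0` cannot
be crossed downwards, which gives invariance, and on a compact interval `[a₀, a]` where `g > 0` the
solution moves upwards with speed bounded below, so it reaches `a` in finite time and then stays
above it. Both facts are proved for a general scalar equation (`barrier`, `eventually_ge`); the
upper side of `ρp` follows by applying them to `-ρ`.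
-/

/-- A level `a` at which the vector field points upwards is not crossed downwards. -/
lemma barrier {g ρ : ℝ → ℝ} {a t : ℝ} (ht : 0 ≤ t)
    (hode : ∀ y : ℝ, 0 ≤ y → HasDerivWithinAt ρ (g (ρ y)) (Set.Ici 0) y)
    (hg : 0 < g a) (hinit : a ≤ ρ t) : ∀ y, t ≤ y → a ≤ ρ y := by
  intro y hy
  have key := image_le_of_deriv_right_lt_deriv_boundary (f := fun x => -ρ x)
    (f' := fun x => -g (ρ x)) (a := t) (b := y) (B := fun _ => -a) (B' := fun _ => 0)
    (fun x hx => ((hode x (ht.trans hx.1)).neg.continuousWithinAt).mono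
      (fun z hz => ht.trans hz.1))
    (fun x hx => ((hode x (ht.trans hx.1)).neg).mono
      (fun z hz => (ht.trans hx.1).trans hz))
    (by simpa using hinit) (fun x => hasDerivAt_const x (-a))
    (fun x _ h => by
      have h' : ρ x = a := neg_injective h
      simpa [h'] using hg)
  have := key (Set.right_mem_Icc.2 hy)
  simpa using this

/-- If the vector field is positive on the compact interval `[a₀, a]`, a solution starting above
`a₀` eventually stays above `a`. -/
lemma eventually_ge {g ρ : ℝ → ℝ} {a₀ a : ℝ} (h : a₀ ≤ a)
    (hode : ∀ y : ℝ, 0 ≤ y → HasDerivWithinAt ρ (g (ρ y)) (Set.Ici 0) y)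
    (hgc : ContinuousOn g (Set.Icc a₀ a)) (hg : ∀ x ∈ Set.Icc a₀ a, 0 < g x)
    (hinit : a₀ ≤ ρ 0) : ∀ᶠ y in atTop, a ≤ ρ y := by
  by_cases hex : ∃ t, 0 ≤ t ∧ a ≤ ρ t
  · obtain ⟨t, ht, hat⟩ := hex
    filter_upwards [eventually_ge_atTop t] with y hy
    exact barrier ht hode (hg a (Set.right_mem_Icc.2 h)) hat y hy
  · exfalso
    push Not at hex
    have hlow := barrier le_rfl hode (hg a₀ (Set.left_mem_Icc.2 h)) hinit
    obtain ⟨m, hm, hmin⟩ := isCompact_Icc.exists_isMinOn (Set.nonempty_Icc.2 h) hgc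
    have hc := hg m hm
    have hd : ∀ x ∈ Set.Ioi (0 : ℝ), HasDerivAt ρ (g (ρ x)) x := fun x hx =>
      (hode x (le_of_lt hx)).hasDerivAt (Ici_mem_nhds hx)
    -- a time by which speed at least `g m` would carry the solution from `ρ 0` to `a`
    set T := (a - ρ 0) / g m with hT
    have hT0 : 0 ≤ T := div_nonneg (sub_nonneg.2 (hex 0 le_rfl).le) hc.le
    have := (convex_Ici (0 : ℝ)).mul_sub_le_image_sub_of_le_deriv (f := ρ) (C := g m)
      (fun x hx => (hode x hx).continuousWithinAt)
      (by
        rw [interior_Ici]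
        exact fun x hx => (hd x hx).differentiableAt.differentiableWithinAt)
      (by
        rw [interior_Ici]
        intro x hx
        rw [(hd x hx).deriv]
        exact hmin ⟨hlow x (le_of_lt hx), (hex x (le_of_lt hx)).le⟩)
      0 Set.self_mem_Ici T hT0 hT0
    have e : g m * (T - 0) = a - ρ 0 := by
      rw [hT]
      field_simp
      ring
    have := hex T hT0
    linarith

/-- Left boundary layer: any solution of `ρ' = (1−ρ)(F(ρ)−C)/C` on `[0,∞)` starting in
`(ρ₋(C), 1)` stays in `(ρ₋(C), 1)` and converges to the stable fix point `ρ₊(C)`. -/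
theorem left_layer_attraction (F : ℝ → ℝ) (ρstar C ρm ρp : ℝ)
    (hcont : ContinuousOn F (Set.Icc 0 1))
    (hconc : StrictConcaveOn ℝ (Set.Icc 0 1) F)
    (h0 : F 0 = 0) (h1 : F 1 = 0)
    (hρstar : ρstar ∈ Set.Ioo (0 : ℝ) 1)
    (hmax : ∀ x ∈ Set.Icc (0 : ℝ) 1, F x ≤ F ρstar)
    (huniq : ∀ x ∈ Set.Icc (0 : ℝ) 1, F x = F ρstar → x = ρstar)
    (hσ : 0 < F ρstar)
    (hC0 : 0 < C) (hCσ : C < F ρstar)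
    (hρm : ρm ∈ Set.Ioo 0 ρstar) (hFm : F ρm = C)
    (hρp : ρp ∈ Set.Ioo ρstar 1) (hFp : F ρp = C)
    (ρ : ℝ → ℝ)
    (hode : ∀ y : ℝ, 0 ≤ y →
      HasDerivWithinAt ρ ((1 - ρ y) * (F (ρ y) - C) / C) (Set.Ici 0) y)
    (hinit : ρ 0 ∈ Set.Ioo ρm 1) :
    (∀ y : ℝ, 0 ≤ y → ρ y ∈ Set.Ioo ρm 1) ∧
    Tendsto ρ atTop (nhds ρp) := by
  have hm0 := hρm.1
  have hp1 := hρp.2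
  have hms := hρm.2
  have hsp := hρp.1
  have hpos : ∀ x, ρm < x → x < ρp → 0 < (1 - x) * (F x - C) / C := by
    intro x h₁ h₂
    have hx := hconc.lt_on_openSegment (x := ρm) (y := ρp) (z := x)
      ⟨by linarith, by linarith⟩ ⟨by linarith, by linarith⟩ (by linarith)
      (by rw [openSegment_eq_Ioo (by linarith)]; exact ⟨h₁, h₂⟩)
    rw [hFm, hFp, min_self] at hx
    exact div_pos (mul_pos (by linarith) (by linarith)) hC0
  have hneg : ∀ x, ρp < x → x < 1 → (1 - x) * (F x - C) / C < 0 := by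
    intro x h₁ h₂
    have hx := hconc.lt_on_openSegment (x := ρstar) (y := x) (z := ρp)
      ⟨by linarith, by linarith⟩ ⟨by linarith, by linarith⟩ (by linarith)
      (by rw [openSegment_eq_Ioo (by linarith)]; exact ⟨hsp, h₁⟩)
    rw [hFp, min_lt_iff] at hx
    have hx' : F x < C := hx.resolve_left (by linarith)
    exact div_neg_of_neg_of_pos (mul_neg_of_pos_of_neg (by linarith) (by linarith)) hC0
  have hgc : ContinuousOn (fun x => (1 - x) * (F x - C) / C) (Set.Icc 0 1) := by
    fun_prop
  -- the reflected equation, solved by `-ρ`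
  have hode' : ∀ y : ℝ, 0 ≤ y → HasDerivWithinAt (fun y => -ρ y)
      ((fun x => -((1 - -x) * (F (-x) - C) / C)) (-ρ y)) (Set.Ici 0) y := by
    intro y hy
    simpa only [neg_neg] using (hode y hy).fun_neg
  have hgc' : ContinuousOn (fun x => -((1 - -x) * (F (-x) - C) / C)) (Set.Icc (-1) 0) :=
    (hgc.comp (f := fun x => -x) continuousOn_neg
      (fun x hx => ⟨by linarith [hx.2], by linarith [hx.1]⟩)).neg
  obtain ⟨hi₁, hi₂⟩ := hinit
  refine ⟨fun y hy => ⟨?_, ?_⟩, tendsto_order.2 ⟨fun l hl => ?_, fun u hu => ?_⟩⟩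
  · obtain ⟨a, ha₁, ha₂⟩ := exists_between (lt_min hi₁ (hms.trans hsp))
    rw [lt_min_iff] at ha₂
    exact ha₁.trans_le (barrier (g := fun x => (1 - x) * (F x - C) / C) le_rfl hode
      (hpos a ha₁ ha₂.2) ha₂.1.le y hy)
  · obtain ⟨b, hb₁, hb₂⟩ := exists_between (max_lt hi₂ hp1)
    rw [max_lt_iff] at hb₁
    have := barrier (g := fun x => -((1 - -x) * (F (-x) - C) / C)) (ρ := fun y => -ρ y)
      (a := -b) le_rfl hode'
      (by simpa only [neg_neg, neg_pos] using hneg b hb₁.2 hb₂) (neg_le_neg hb₁.1.le) y hy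
    linarith
  · obtain ⟨a, ha₁, ha₂⟩ := exists_between (max_lt hl (hms.trans hsp))
    rw [max_lt_iff] at ha₁
    have ha₀ : ρm < min (ρ 0) a := lt_min hi₁ ha₁.2
    have := eventually_ge (g := fun x => (1 - x) * (F x - C) / C) (min_le_right (ρ 0) a) hode
      (hgc.mono (Set.Icc_subset_Icc (by linarith) (by linarith)))
      (fun x hx => hpos x (ha₀.trans_le hx.1) (hx.2.trans_lt ha₂)) (min_le_left _ _)
    filter_upwards [this] with y hy
    exact ha₁.1.trans_le hy
  · obtain ⟨b, hb₁, hb₂⟩ := exists_between (lt_min hu hp1)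
    rw [lt_min_iff] at hb₂
    have hb₀ : max (ρ 0) b < 1 := max_lt hi₂ hb₂.2
    have := eventually_ge (g := fun x => -((1 - -x) * (F (-x) - C) / C)) (ρ := fun y => -ρ y)
      (neg_le_neg (le_max_right (ρ 0) b)) hode'
      (hgc'.mono (Set.Icc_subset_Icc (by linarith) (by linarith)))
      (fun x hx => neg_pos.2 (hneg (-x) (by linarith [hx.2]) (by linarith [hx.1])))
      (neg_le_neg (le_max_left _ _))
    filter_upwards [this] with y hy
    linarith [hb₂.1]
end

section
/- Let F : ℝ → ℝ be continuous on [0,1], strictly concave on [0,1], with F(0) = F(1) = 0, let ρ* ∈ (0,1) be its unique maximizer on [0,1] and σ := F(ρ*) > 0. Fix C with 0 < C < σ, let ρ_-(C) ∈ (0, ρ*) and ρ_+(C) ∈ (ρ*, 1) be the unique solutions of F(ρ) = C below and above ρ*. Let ρ : [0, ∞) → ℝ be differentiable with ρ′(y) = −(1 − ρ(y))(F(ρ(y)) − C)/C for all y ≥ 0 and ρ(0) ∈ [0, ρ_+(C)). Then ρ(y) ∈ [0, ρ_+(C)) for all y ≥ 0 and ρ(y) → ρ_-(C) as y → ∞.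 -/
open Filter

/-!
Write the equation as `ρ' = g(ρ)` with `g(r) = -(1 - r)(F r - C)/C`. Strict concavity gives
`F < C` on `[0, ρm)` and `F > C` on `(ρm, ρp)`, so `g > 0` on `[0, ρm)` and `g < 0` on `(ρm, ρp)`.
Hence every constant level in `(ρm, ρp)` is an upper barrier, and every level in `[0, ρm)` a lower
one (`le_of_barrier`). On a compact interval where `g < 0` the speed is bounded away from zero, so
a descending affine barrier forces the solution below the interval in finite time
(`eventually_le_of_neg`); the reflection `ρ ↦ -ρ` gives the lower bound. Squeezing the two bounds
to `ρm` yields the limit. No Lipschitz property of `F` or uniqueness of solutions is needed: the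
solution stays below `ρp` because it stays below a level `a < ρp` chosen above `ρ 0` and `ρm`.
-/

/-- A solution cannot cross upwards an affine barrier `y ↦ c - d * (y - s)` along which
`g < -d`. -/
lemma le_of_barrier {g ρ : ℝ → ℝ}
    (hode : ∀ y : ℝ, 0 ≤ y → HasDerivWithinAt ρ (g (ρ y)) (Set.Ici 0) y)
    {s t c d : ℝ} (hs : 0 ≤ s) (hst : s ≤ t) (hc : ρ s ≤ c)
    (hg : ∀ y ∈ Set.Ico s t, g (c - d * (y - s)) < -d) :
    ρ t ≤ c - d * (t - s) := by
  have hB : ∀ y : ℝ, HasDerivAt (fun y => c - d * (y - s)) (-d) y := by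
    intro y
    have h := (((hasDerivAt_id y).sub_const s).const_mul d).const_sub c
    simpa using h
  refine image_le_of_deriv_right_lt_deriv_boundary (f := ρ) (f' := fun y => g (ρ y))
    (B := fun y => c - d * (y - s)) (B' := fun _ => -d) (a := s) (b := t)
    ?_ ?_ ?_ hB ?_ ⟨hst, le_rfl⟩
  · intro y hy
    exact (hode y (hs.trans hy.1)).continuousWithinAt.mono
      (fun z hz => hs.trans hz.1)
  · intro y hy
    exact (hode y (hs.trans hy.1)).mono (fun z hz => (hs.trans hy.1).trans hz)
  · simpa using hc
  · intro y hy h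
    rw [h]
    exact hg y hy

/-- If `g < 0` on `[m, a]`, a solution starting below `a` stays below `a`, and is below `m` from
some time on. -/
lemma eventually_le_of_neg {g ρ : ℝ → ℝ}
    (hode : ∀ y : ℝ, 0 ≤ y → HasDerivWithinAt ρ (g (ρ y)) (Set.Ici 0) y)
    {m a : ℝ} (hma : m ≤ a) (hg : ContinuousOn g (Set.Icc m a))
    (hneg : ∀ r ∈ Set.Icc m a, g r < 0) (h0 : ρ 0 ≤ a) :
    (∀ y : ℝ, 0 ≤ y → ρ y ≤ a) ∧ ∀ᶠ y in atTop, ρ y ≤ m := by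
  have hconst : ∀ c ∈ Set.Icc m a, ∀ s t : ℝ, 0 ≤ s → s ≤ t → ρ s ≤ c → ρ t ≤ c := by
    intro c hc s t hs hst h
    have := le_of_barrier hode (d := 0) hs hst h (by simpa using fun _ _ _ => hneg c hc)
    simpa using this
  refine ⟨fun y hy => hconst a ⟨hma, le_rfl⟩ 0 y le_rfl hy h0, ?_⟩
  obtain ⟨x, hx, hxmax⟩ := isCompact_Icc.exists_isMaxOn ⟨m, le_rfl, hma⟩ hg
  -- `-2 * d` is the maximum of `g` on `[m, a]`, so `g < -d` there.
  obtain ⟨d, hd⟩ : ∃ d, d = -g x / 2 := ⟨_, rfl⟩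
  have hgx := hneg x hx
  have hdpos : 0 < d := by linarith
  have hT : 0 ≤ (a - m) / d := div_nonneg (by linarith) hdpos.le
  have hTd : d * ((a - m) / d) = a - m := by field_simp
  have hmT : ρ ((a - m) / d) ≤ m := by
    have := le_of_barrier hode (d := d) le_rfl hT h0 (by
      intro y hy
      have h1 : d * y ≤ a - m := by
        rw [← hTd]; exact mul_le_mul_of_nonneg_left hy.2.le hdpos.le
      have h2 : 0 ≤ d * y := mul_nonneg hdpos.le hy.1
      have h3 : g (a - d * (y - 0)) ≤ g x := hxmax ⟨by linarith, by linarith⟩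
      linarith)
    linarith
  filter_upwards [eventually_ge_atTop ((a - m) / d)] with y hy
  exact hconst m ⟨le_rfl, hma⟩ _ y hT hy hmT

/-- Right boundary layer: any solution of `ρ' = −(1−ρ)(F(ρ)−C)/C` on `[0,∞)` starting in
`[0, ρ₊(C))` stays in `[0, ρ₊(C))` and converges to the stable fix point `ρ₋(C)`. -/
theorem right_layer_attraction (F : ℝ → ℝ) (ρstar C ρm ρp : ℝ)
    (hcont : ContinuousOn F (Set.Icc 0 1))
    (hconc : StrictConcaveOn ℝ (Set.Icc 0 1) F)
    (h0 : F 0 = 0) (h1 : F 1 = 0)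
    (hρstar : ρstar ∈ Set.Ioo (0 : ℝ) 1)
    (hmax : ∀ x ∈ Set.Icc (0 : ℝ) 1, F x ≤ F ρstar)
    (huniq : ∀ x ∈ Set.Icc (0 : ℝ) 1, F x = F ρstar → x = ρstar)
    (hσ : 0 < F ρstar)
    (hC0 : 0 < C) (hCσ : C < F ρstar)
    (hρm : ρm ∈ Set.Ioo 0 ρstar) (hFm : F ρm = C)
    (hρp : ρp ∈ Set.Ioo ρstar 1) (hFp : F ρp = C)
    (ρ : ℝ → ℝ)
    (hode : ∀ y : ℝ, 0 ≤ y →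
      HasDerivWithinAt ρ (-((1 - ρ y) * (F (ρ y) - C) / C)) (Set.Ici 0) y)
    (hinit : ρ 0 ∈ Set.Ico 0 ρp) :
    (∀ y : ℝ, 0 ≤ y → ρ y ∈ Set.Ico 0 ρp) ∧
    Tendsto ρ atTop (nhds ρm) := by
  obtain ⟨hs0, hs1⟩ := hρstar
  obtain ⟨hm0, hms⟩ := hρm
  obtain ⟨hps, hp1⟩ := hρp
  obtain ⟨hi0, hip⟩ := hinit
  have hlow : ∀ r, 0 ≤ r → r < ρm → F r < C := by
    intro r hr0 hr
    by_contra! h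
    have := hconc.lt_on_openSegment (x := r) (y := ρstar) (z := ρm)
      ⟨hr0, by linarith⟩ ⟨hs0.le, hs1.le⟩ (by linarith)
      (by rw [openSegment_eq_Ioo (by linarith)]; exact ⟨hr, hms⟩)
    rw [hFm] at this
    exact absurd this (not_lt.2 (le_min h hCσ.le))
  have hhigh : ∀ r, ρm < r → r < ρp → C < F r := by
    intro r hr1 hr2
    have := hconc.lt_on_openSegment (x := ρm) (y := ρp) (z := r)
      ⟨hm0.le, by linarith⟩ ⟨by linarith, hp1.le⟩ (by linarith)
      (by rw [openSegment_eq_Ioo (by linarith)]; exact ⟨hr1, hr2⟩)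
    rwa [hFm, hFp, min_self] at this
  obtain ⟨g, hgdef⟩ : ∃ g : ℝ → ℝ, g = fun r => -((1 - r) * (F r - C) / C) := ⟨_, rfl⟩
  have hode' : ∀ y : ℝ, 0 ≤ y → HasDerivWithinAt ρ (g (ρ y)) (Set.Ici 0) y := by
    rw [hgdef]; exact hode
  have hgcont : ContinuousOn g (Set.Icc 0 1) := by
    rw [hgdef]; fun_prop
  have hgneg : ∀ r, ρm < r → r < ρp → g r < 0 := by
    intro r h1 h2
    have := hhigh r h1 h2
    rw [hgdef]
    exact neg_neg_of_pos (div_pos (mul_pos (by linarith) (by linarith)) hC0)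
  have hgpos : ∀ r, 0 ≤ r → r < ρm → 0 < g r := by
    intro r h1 h2
    have := hlow r h1 h2
    rw [hgdef]
    exact neg_pos.2 (div_neg_of_neg_of_pos (mul_neg_of_pos_of_neg (by linarith) (by linarith)) hC0)
  have hup : ∀ m a, ρm < m → m ≤ a → a < ρp → ρ 0 ≤ a →
      (∀ y : ℝ, 0 ≤ y → ρ y ≤ a) ∧ ∀ᶠ y in atTop, ρ y ≤ m := by
    intro m a h1 h2 h3 h4
    exact eventually_le_of_neg hode' h2
      (hgcont.mono (Set.Icc_subset_Icc (by linarith) (by linarith)))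
      (fun r hr => hgneg r (by linarith [hr.1]) (by linarith [hr.2])) h4
  -- `-ρ` solves the equation with right-hand side `r ↦ -g (-r)`.
  have hdown : ∀ m, 0 ≤ m → m < ρm →
      (∀ y : ℝ, 0 ≤ y → -ρ y ≤ 0) ∧ ∀ᶠ y in atTop, -ρ y ≤ -m := by
    intro m h1 h2
    refine eventually_le_of_neg (g := fun r => -g (-r)) (ρ := fun y => -ρ y)
      (fun y hy => by simpa using (hode' y hy).fun_neg) (by linarith) ?_ ?_ (by simpa using hi0)
    · refine (hgcont.comp continuousOn_neg ?_).neg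
      intro r hr
      exact ⟨by linarith [hr.2], by linarith [hr.1]⟩
    · intro r hr
      exact neg_neg_of_pos (hgpos _ (by linarith [hr.2]) (by linarith [hr.1]))
  obtain ⟨a, ha, hap⟩ := exists_between (max_lt hip (hms.trans hps))
  obtain ⟨hia, hma⟩ := max_lt_iff.1 ha
  refine ⟨fun y hy => ⟨by linarith [(hdown 0 le_rfl hm0).1 y hy],
    ((hup a a hma le_rfl hap hia.le).1 y hy).trans_lt hap⟩, ?_⟩
  rw [tendsto_order]
  constructor
  · intro b hb
    obtain ⟨m, hm, hmm⟩ := exists_between (max_lt hb hm0)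
    obtain ⟨hbm, h0m⟩ := max_lt_iff.1 hm
    filter_upwards [(hdown m h0m.le hmm).2] with y hy
    linarith
  · intro b hb
    obtain ⟨m, hmm, hm⟩ := exists_between (lt_min hb hma)
    obtain ⟨hmb, hmla⟩ := lt_min_iff.1 hm
    filter_upwards [(hup m a hmm hmla.le hap hia.le).2] with y hy
    linarith
end

section
/- Let z1 > 0, z2 > 0 and w3 ∈ [0,1) be real numbers, and set z3 := z1 + z2 and ρ̄ := (w3 + z3)/(1 + z3). Then the unique 6-tuple (ρ1, q1, ρ2, q2, ρ3, q3) of real numbers with ρ1, ρ2, ρ3 < 1 satisfying the characteristic relations q1 = z1(1−ρ1), q2 = z2(1−ρ2), q3 = ρ3 − w3, together with the coupling conditions q1 + q2 = q3, q3/(1−ρ3) = z1 + z2, and q1/q2 = z1/z2, is given by ρ1 = ρ2 = ρ3 = ρ̄, q1 = z1(1−ρ̄), q2 = z2(1−ρ̄), q3 = z3(1−ρ̄). In particular the three densities at the junction are equal. -/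
/-!
For `ρ3 < 1` the conditions on the outgoing road amount to the linear equation
`ρ3 - w3 = (z1 + z2) * (1 - ρ3)`, whose only solution is `ρ̄`. Since `q2 > 0`, the flux-ratio
condition reads `(1 - ρ1) / (1 - ρ2) = 1`, so `ρ1 = ρ2`, and flux balance then gives
`(z1 + z2) * (1 - ρ1) = (z1 + z2) * (1 - ρ3)`, so all densities agree. Conversely, `w3 < 1`
gives `ρ̄ < 1`, so every denominator is nonzero and the conditions hold by cancellation.
-/

/-- Merging junction with coupling conditions `q₁+q₂ = q₃`, `z₃ = z₁+z₂` and
`q₁/q₂ = z₁/z₂`: the unique solution of the Riemann problem at the node has equal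
densities `ρ₁ = ρ₂ = ρ₃ = ρ̄ = (w₃+z₃)/(1+z₃)` and fluxes `qᵢ = zᵢ(1−ρ̄)`. -/
theorem fair_merge_riemann_solution (z1 z2 w3 : ℝ)
    (hz1 : 0 < z1) (hz2 : 0 < z2) (hw0 : 0 ≤ w3) (hw1 : w3 < 1) :
    ∀ ρ1 q1 ρ2 q2 ρ3 q3 : ℝ,
      (ρ1 < 1 ∧ ρ2 < 1 ∧ ρ3 < 1 ∧
        q1 = z1 * (1 - ρ1) ∧ q2 = z2 * (1 - ρ2) ∧ q3 = ρ3 - w3 ∧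
        q1 + q2 = q3 ∧ q3 / (1 - ρ3) = z1 + z2 ∧ q1 / q2 = z1 / z2) ↔
      (ρ1 = (w3 + (z1 + z2)) / (1 + (z1 + z2)) ∧
        ρ2 = (w3 + (z1 + z2)) / (1 + (z1 + z2)) ∧
        ρ3 = (w3 + (z1 + z2)) / (1 + (z1 + z2)) ∧
        q1 = z1 * (1 - (w3 + (z1 + z2)) / (1 + (z1 + z2))) ∧
        q2 = z2 * (1 - (w3 + (z1 + z2)) / (1 + (z1 + z2))) ∧
        q3 = (z1 + z2) * (1 - (w3 + (z1 + z2)) / (1 + (z1 + z2)))) := by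
  intro ρ1 q1 ρ2 q2 ρ3 q3
  have hz : 0 < z1 + z2 := add_pos hz1 hz2
  have hd : 0 < 1 + (z1 + z2) := by linarith
  have hr1 : (w3 + (z1 + z2)) / (1 + (z1 + z2)) < 1 := by
    rw [div_lt_one hd]; linarith
  have hr : (w3 + (z1 + z2)) / (1 + (z1 + z2)) * (1 + (z1 + z2)) = w3 + (z1 + z2) :=
    div_mul_cancel₀ _ hd.ne'
  generalize (w3 + (z1 + z2)) / (1 + (z1 + z2)) = r at hr1 hr ⊢
  constructor
  · rintro ⟨h1, h2, h3, rfl, rfl, rfl, hsum, hinv, hratio⟩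
    rw [div_eq_iff (sub_pos.2 h3).ne'] at hinv
    rw [div_eq_div_iff (mul_pos hz2 (sub_pos.2 h2)).ne' hz2.ne'] at hratio
    -- Balance of the first invariant is linear in `ρ3`, with the same equation as `r`.
    have e3 : ρ3 = r := mul_right_cancel₀ hd.ne' (by linarith)
    -- The ratio condition cancels to equality of the incoming densities.
    have e12 : ρ1 = ρ2 := mul_left_cancel₀ (mul_pos hz1 hz2).ne' (by linarith)
    subst e3 e12
    have e1 : ρ1 = ρ3 := mul_left_cancel₀ hz.ne' (by linarith)
    subst e1
    exact ⟨rfl, rfl, rfl, rfl, rfl, hinv⟩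
  · rintro ⟨rfl, rfl, rfl, rfl, rfl, rfl⟩
    have hp := (sub_pos.2 hr1).ne'
    exact ⟨hr1, hr1, hr1, rfl, rfl, by linarith, by ring,
      mul_div_cancel_right₀ _ hp, mul_div_mul_right _ _ hp⟩
end

section
/- Let z1 ≥ 0, z2 > 0 and w3 ∈ [0,1] be real numbers; set z3 := z1 + z2, ρ3 := (w3 + z3)/(1 + z3), q3 := z3(1 − ρ3), and assume z1/(1+z1) ≤ q3. Define q1 := z1/(1+z1), ρ1 := z1/(1+z1), q2 := q3 − q1 and ρ2 := 1 − q2/z2. Then q1 = z1(1−ρ1), q2 = z2(1−ρ2), q1 = min(q3, ρ1), q1 + q2 = q3, and 0 ≤ qi ≤ ρi ≤ 1 for i = 1, 2, 3. In particular q2 ≤ z2/(1+z2), which follows from the subadditivity (x+y)/(1+x+y) ≤ x/(1+x) + y/(1+y) for x, y ≥ 0. -/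
/-!
Eliminating `ρ₃` gives `q₃ = (1 - w₃) z₃/(1 + z₃)` and `ρ₃ - q₃ = w₃`, so the state on road 3 is
admissible and `q₃ ≤ z₃/(1 + z₃)`. Since `x ↦ x/(1 + x)` is subadditive (`div_one_add_subadd`),
`q₂ = q₃ - z₁/(1 + z₁) ≤ z₂/(1 + z₂)`, and this bound is equivalent to `q₂ ≤ 1 - q₂/z₂ = ρ₂`.
-/

lemma div_one_add_subadd {x y : ℝ} (hx : 0 ≤ x) (hy : 0 ≤ y) :
    (x + y) / (1 + x + y) ≤ x / (1 + x) + y / (1 + y) := by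
  rw [add_div]
  gcongr ?_ + ?_
  · exact div_le_div_of_nonneg_left hx (by linarith) (by linarith)
  · exact div_le_div_of_nonneg_left hy (by linarith) (by linarith)

/-- Priority-merge Riemann solution in the case `z₁/(1+z₁) ≤ q₃`: the explicit solution
satisfies the characteristic relations, the priority condition `q₁ = min(q₃, ρ₁)`, the
flux balance, and stays in the traffic domain `0 ≤ qᵢ ≤ ρᵢ ≤ 1`; in particular
`q₂ ≤ z₂/(1+z₂)`, by subadditivity of `x ↦ x/(1+x)`. -/
theorem priority_merge_in_domain (z1 z2 w3 : ℝ)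
    (hz1 : 0 ≤ z1) (hz2 : 0 < z2) (hw : w3 ∈ Set.Icc (0 : ℝ) 1)
    (z3 ρ3 q3 q1 ρ1 q2 ρ2 : ℝ)
    (hz3 : z3 = z1 + z2)
    (hρ3 : ρ3 = (w3 + z3) / (1 + z3))
    (hq3 : q3 = z3 * (1 - ρ3))
    (hle : z1 / (1 + z1) ≤ q3)
    (hq1 : q1 = z1 / (1 + z1)) (hρ1 : ρ1 = z1 / (1 + z1))
    (hq2 : q2 = q3 - q1) (hρ2 : ρ2 = 1 - q2 / z2) :
    q1 = z1 * (1 - ρ1) ∧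
    q2 = z2 * (1 - ρ2) ∧
    q1 = min q3 ρ1 ∧
    q1 + q2 = q3 ∧
    (0 ≤ q1 ∧ q1 ≤ ρ1 ∧ ρ1 ≤ 1) ∧
    (0 ≤ q2 ∧ q2 ≤ ρ2 ∧ ρ2 ≤ 1) ∧
    (0 ≤ q3 ∧ q3 ≤ ρ3 ∧ ρ3 ≤ 1) ∧
    q2 ≤ z2 / (1 + z2) ∧
    (∀ x y : ℝ, 0 ≤ x → 0 ≤ y →
      (x + y) / (1 + x + y) ≤ x / (1 + x) + y / (1 + y)) := by
  obtain ⟨hw0, hw1⟩ := hw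
  have hz3pos : 0 < z3 := by linarith
  have h1ne : 1 + z1 ≠ 0 := by linarith
  have h3ne : 1 + z3 ≠ 0 := by linarith
  have hsub : z3 / (1 + z3) ≤ z1 / (1 + z1) + z2 / (1 + z2) := by
    have h := div_one_add_subadd hz1 hz2.le
    rwa [add_assoc, ← hz3] at h
  have hq3' : q3 = (1 - w3) * (z3 / (1 + z3)) := by
    rw [hq3, hρ3]; field_simp; ring
  have hρq3 : ρ3 - q3 = w3 := by
    rw [hq3, hρ3]; field_simp; ring
  have hfrac : 0 ≤ z3 / (1 + z3) := by positivity
  have hq3le : q3 ≤ z3 / (1 + z3) := by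
    rw [hq3']; exact mul_le_of_le_one_left hfrac (by linarith)
  have hq1nn : 0 ≤ z1 / (1 + z1) := by positivity
  have hq2nn : 0 ≤ q2 := by linarith
  have hq2le : q2 ≤ z2 / (1 + z2) := by linarith
  have hρ2z : z2 * (1 - ρ2) = q2 := by
    rw [hρ2]; field_simp; ring
  refine ⟨?_, hρ2z.symm, ?_, by linarith, ⟨by linarith, by linarith, ?_⟩, ⟨hq2nn, ?_, ?_⟩,
    ⟨by linarith, by linarith, ?_⟩, hq2le, fun x y hx hy => div_one_add_subadd hx hy⟩
  · rw [hq1, hρ1]; field_simp; ring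
  · rw [hq1, hρ1, min_eq_right hle]
  · rw [hρ1, div_le_one (by linarith)]; linarith
  -- Cleared of denominators, the bound on `q₂` reads `q₂ + q₂ z₂ ≤ z₂`; divide by `z₂`.
  · rw [le_div_iff₀ (by linarith)] at hq2le
    refine le_of_mul_le_mul_left ?_ hz2
    linarith
  · rw [hρ2]
    have : 0 ≤ q2 / z2 := by positivity
    linarith
  · rw [hρ3, div_le_one (by linarith)]; linarith
end

section
/- Let z ≥ 0 and a, b > 0 be real numbers. Then the equation z(a − q)(b − q) = q((a + b) − 2q), equivalently the quadratic equation (z + 2)q² − (a + b)(z + 1)q + z a b = 0, has exactly one solution q in the half-open interval [0, min(a, b)). -/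
/-!
For `q < min a b` the equation says `z = q / (a - q) + q / (b - q)`, and the right-hand side is
strictly increasing in `q`, which gives uniqueness (`diverge_root_unique`, with denominators
cleared). For existence, let `m = min a b` and let `c = z * m / (z + 1) < m` be the point where
`c / (m - c) = z`: the right-hand side is `0 ≤ z` at `0` and at least `z` at `c`, so the
intermediate value theorem on `[0, c]` yields a root (`diverge_root_exists`). Working on `[0, c]`
rather than `[0, m]` keeps the root away from `m`, which is itself a spurious root of the
quadratic when `a = b`.
-/

theorem diverge_root_exists {z a b : ℝ} (hz : 0 ≤ z) (ha : 0 < a) (hab : a ≤ b) :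
    ∃ q : ℝ, 0 ≤ q ∧ q < a ∧ z * (a - q) * (b - q) = q * ((a + b) - 2 * q) := by
  obtain ⟨c, hc⟩ : ∃ c : ℝ, c = z * a / (z + 1) := ⟨_, rfl⟩
  have hc0 : 0 ≤ c := by rw [hc]; positivity
  have hca : c < a := by
    rw [hc, div_lt_iff₀ (by linarith)]
    linarith
  have hzc : z * (a - c) = c := by
    rw [hc]
    field_simp
    ring
  have hcont : ContinuousOn
      (fun q : ℝ => z * (a - q) * (b - q) - q * ((a + b) - 2 * q)) (Set.Icc 0 c) := by
    fun_prop
  have hmem : (0 : ℝ) ∈ Set.Icc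
      (z * (a - c) * (b - c) - c * ((a + b) - 2 * c))
      (z * (a - 0) * (b - 0) - 0 * ((a + b) - 2 * 0)) := by
    constructor
    · rw [hzc]
      nlinarith [mul_nonneg hc0 (sub_nonneg.mpr hca.le)]
    · have : 0 ≤ z * a * b := mul_nonneg (mul_nonneg hz ha.le) (ha.le.trans hab)
      linarith
  obtain ⟨q, ⟨hq0, hqc⟩, hq⟩ := intermediate_value_Icc' hc0 hcont hmem
  exact ⟨q, hq0, hqc.trans_lt hca, sub_eq_zero.mp hq⟩

theorem diverge_root_unique {z a b p q : ℝ} (ha : 0 < a) (hb : 0 < b)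
    (hpa : p < a) (hpb : p < b) (hqa : q < a) (hqb : q < b)
    (hp : z * (a - p) * (b - p) = p * ((a + b) - 2 * p))
    (hq : z * (a - q) * (b - q) = q * ((a + b) - 2 * q)) : p = q := by
  -- Eliminating `z` by cross-multiplication leaves `q - p` times a positive factor.
  have key : (q - p) * (a * ((b - p) * (b - q)) + b * ((a - p) * (a - q))) = 0 := by
    linear_combination (a - q) * (b - q) * hp - (a - p) * (b - p) * hq
  have h1 : 0 < a * ((b - p) * (b - q)) :=
    mul_pos ha (mul_pos (sub_pos.mpr hpb) (sub_pos.mpr hqb))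
  have h2 : 0 < b * ((a - p) * (a - q)) :=
    mul_pos hb (mul_pos (sub_pos.mpr hpa) (sub_pos.mpr hqa))
  rcases mul_eq_zero.mp key with h | h <;> linarith

/-- The coupling equation of the diverging junction with drivers' preferences:
for `z ≥ 0`, `a, b > 0`, the equation `z(a−q)(b−q) = q((a+b) − 2q)` — equivalently the
quadratic `(z+2)q² − (a+b)(z+1)q + zab = 0` — has exactly one solution `q ∈ [0, min(a,b))`. -/
theorem diverge_quadratic_unique (z a b : ℝ) (hz : 0 ≤ z) (ha : 0 < a) (hb : 0 < b) :
    (∀ q : ℝ, z * (a - q) * (b - q) = q * ((a + b) - 2 * q) ↔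
      (z + 2) * q ^ 2 - (a + b) * (z + 1) * q + z * a * b = 0) ∧
    (∃! q : ℝ, q ∈ Set.Ico 0 (min a b) ∧
      z * (a - q) * (b - q) = q * ((a + b) - 2 * q)) := by
  refine ⟨fun q => ⟨fun h => by linear_combination h, fun h => by linear_combination h⟩, ?_⟩
  have hex : ∃ q : ℝ, q ∈ Set.Ico 0 (min a b) ∧
      z * (a - q) * (b - q) = q * ((a + b) - 2 * q) := by
    rcases le_total a b with hab | hba
    · obtain ⟨q, h0, h1, h⟩ := diverge_root_exists hz ha hab
      exact ⟨q, ⟨h0, lt_min h1 (h1.trans_le hab)⟩, h⟩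
    · obtain ⟨q, h0, h1, h⟩ := diverge_root_exists hz hb hba
      exact ⟨q, ⟨h0, lt_min (h1.trans_le hba) h1⟩, by linear_combination h⟩
  refine existsUnique_of_exists_of_unique hex ?_
  rintro p q ⟨⟨-, hpm⟩, hp⟩ ⟨⟨-, hqm⟩, hq⟩
  exact diverge_root_unique ha hb (lt_min_iff.mp hpm).1 (lt_min_iff.mp hpm).2
    (lt_min_iff.mp hqm).1 (lt_min_iff.mp hqm).2 hp hq
end

section
/- Let z1 ≥ 0 and w̄ ∈ [0,1) be real numbers with z1/(2(1+z1)) ≤ w̄. Define q1 := 2 z1 (1 − w̄)/(2 + z1) and ρ := w̄ + q1/2. Then ρ = (2w̄ + z1)/(2 + z1), q1 = z1(1 − ρ), q1/2 = ρ − w̄, (q1/2)/(1−ρ) + (q1/2)/(1−ρ) = z1, 0 ≤ q1 ≤ ρ ≤ 1, and q1 ≤ z1/(1+z1). -/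
/-!
Everything follows from `1 - ρ = 2 * (1 - wbar) / (2 + z1) > 0`, which gives the relation
`q1 = z1 * (1 - ρ)`. The lower bound on `wbar` is equivalent to `q1 ≤ ρ`, and, given that
relation, `q1 ≤ ρ` implies the bound `q1 ≤ z1 / (1 + z1)`.
-/

/-- Diverging junction with equal drivers' preferences `α = 1/2` and equal outgoing
invariants `w₂ = w₃ = w̄`, in the case `z₁/(2(1+z₁)) ≤ w̄`: the explicit solution
`q₁ = 2z₁(1−w̄)/(2+z₁)`, `ρ = w̄ + q₁/2` satisfies the coupling and characteristic
relations and lies in the traffic domain. -/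
theorem diverge_equal_preferences (z1 wbar : ℝ)
    (hz : 0 ≤ z1) (hw0 : 0 ≤ wbar) (hw1 : wbar < 1)
    (h : z1 / (2 * (1 + z1)) ≤ wbar)
    (q1 ρ : ℝ)
    (hq1 : q1 = 2 * z1 * (1 - wbar) / (2 + z1))
    (hρ : ρ = wbar + q1 / 2) :
    ρ = (2 * wbar + z1) / (2 + z1) ∧
    q1 = z1 * (1 - ρ) ∧
    q1 / 2 = ρ - wbar ∧
    (q1 / 2) / (1 - ρ) + (q1 / 2) / (1 - ρ) = z1 ∧
    0 ≤ q1 ∧ q1 ≤ ρ ∧ ρ ≤ 1 ∧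
    q1 ≤ z1 / (1 + z1) := by
  have h2 : 0 < 2 + z1 := by linarith
  have h1 : 0 < 1 + z1 := by linarith
  have hρ' : ρ = (2 * wbar + z1) / (2 + z1) := by
    rw [hρ, hq1]; field_simp; ring
  have h1ρ : 1 - ρ = 2 * (1 - wbar) / (2 + z1) := by
    rw [hρ']; field_simp; ring
  have hpos : 0 < 1 - ρ := by
    rw [h1ρ]; exact div_pos (by linarith) h2
  have hq : q1 = z1 * (1 - ρ) := by
    rw [h1ρ, hq1]; ring
  -- Over the common denominator `2 + z1`, this is exactly `z1 ≤ 2 * wbar * (1 + z1)`.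
  have hle : q1 ≤ ρ := by
    rw [div_le_iff₀ (by linarith)] at h
    rw [hq1, hρ']
    exact div_le_div_of_nonneg_right (by linarith) h2.le
  refine ⟨hρ', hq, by linarith, ?_, ?_, hle, by linarith, ?_⟩
  · rw [hq]; field_simp; ring
  · rw [hq]; positivity
  · -- Since `q1 = z1 * (1 - ρ)`, one has `q1 * (1 + z1) = z1 * (1 - ρ + q1)`, and `q1 ≤ ρ`.
    rw [le_div_iff₀ h1]
    have := mul_le_mul_of_nonneg_left hle hz
    linarith
end

section
/- Let z1 ≥ 0 and w2, w3 ∈ [0,1] be real numbers with s := w2 + w3 < 2 and z1/(1+z1) ≤ s. Define q1 := (2 − s) z1/(2 + z1), ρ := (s + z1)/(2 + z1), q2 := (q1 + (w3 − w2))/2 and q3 := (q1 − (w3 − w2))/2. Then q1 = z1(1 − ρ), q2 = ρ − w2, q3 = ρ − w3, q1 = q2 + q3, q2 − q3 = w3 − w2, q2/(1−ρ) + q3/(1−ρ) = z1, 0 ≤ q1 ≤ ρ < 1, and q1 ≤ z1/(1+z1), with ρ − q1 = (s(1+z1) − z1)/(2+z1) ≥ 0. -/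
/-!
The formulas for `q₁` and `ρ` are the solution of the linear system `q₁ = z₁(1 - ρ)`,
`q₁ = 2ρ - (w₂ + w₃)`; these two identities give all the coupling and characteristic relations.
The hypothesis `z₁/(1+z₁) ≤ w₂ + w₃` is exactly `0 ≤ ρ - q₁`, and then
`q₁ = z₁(1 - ρ) ≤ z₁(1 - q₁)` rearranges to `q₁ ≤ z₁/(1+z₁)`.
-/

/-- Diverging junction without drivers' preferences, in the case
`z₁/(1+z₁) ≤ s := w₂ + w₃ < 2`: the explicit solution `q₁ = (2−s)z₁/(2+z₁)`,
`ρ = (s+z₁)/(2+z₁)`, `q₂ = (q₁+(w₃−w₂))/2`, `q₃ = (q₁−(w₃−w₂))/2` satisfies the coupling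
and characteristic relations and lies in the traffic domain. -/
theorem diverge_no_preferences (z1 w2 w3 : ℝ)
    (hz : 0 ≤ z1) (hw2 : w2 ∈ Set.Icc (0 : ℝ) 1) (hw3 : w3 ∈ Set.Icc (0 : ℝ) 1)
    (hs : w2 + w3 < 2) (hle : z1 / (1 + z1) ≤ w2 + w3)
    (q1 ρ q2 q3 : ℝ)
    (hq1 : q1 = (2 - (w2 + w3)) * z1 / (2 + z1))
    (hρ : ρ = ((w2 + w3) + z1) / (2 + z1))
    (hq2 : q2 = (q1 + (w3 - w2)) / 2)
    (hq3 : q3 = (q1 - (w3 - w2)) / 2) :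
    q1 = z1 * (1 - ρ) ∧
    q2 = ρ - w2 ∧
    q3 = ρ - w3 ∧
    q1 = q2 + q3 ∧
    q2 - q3 = w3 - w2 ∧
    q2 / (1 - ρ) + q3 / (1 - ρ) = z1 ∧
    0 ≤ q1 ∧ q1 ≤ ρ ∧ ρ < 1 ∧
    q1 ≤ z1 / (1 + z1) ∧
    ρ - q1 = ((w2 + w3) * (1 + z1) - z1) / (2 + z1) ∧
    0 ≤ ρ - q1 := by
  have h2 : 0 < 2 + z1 := by linarith
  have h1 : 0 < 1 + z1 := by linarith
  have hchar : q1 = z1 * (1 - ρ) := by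
    rw [hq1, hρ]; field_simp; ring
  have hsum : q1 = 2 * ρ - (w2 + w3) := by
    rw [hq1, hρ]; field_simp; ring
  have hρ1 : ρ < 1 := by
    rw [hρ, div_lt_one h2]; linarith
  have hdiff : ρ - q1 = ((w2 + w3) * (1 + z1) - z1) / (2 + z1) := by
    rw [hq1, hρ]; field_simp; ring
  have hdiff0 : 0 ≤ ρ - q1 := by
    rw [hdiff]
    rw [div_le_iff₀ h1] at hle
    exact div_nonneg (by linarith) h2.le
  refine ⟨hchar, by linarith, by linarith, by linarith, by linarith, ?_, ?_, by linarith, hρ1,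
    ?_, hdiff, hdiff0⟩
  · have hq : q2 + q3 = z1 * (1 - ρ) := by linarith
    rw [← add_div, hq, mul_div_cancel_right₀ _ (by linarith)]
  · rw [hchar]
    exact mul_nonneg hz (by linarith)
  · rw [le_div_iff₀ h1]
    have := mul_nonneg hz hdiff0
    linarith
end
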